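/- arXiv:2205.03581 — 2 statements merged into one kernel-verified Lean document; each statement's English description precedes it below -/
import Mathlib

section
/- Let A be a complex unital Banach algebra and a, b ∈ A. Then the ag-Drazin spectra satisfy σ_ad(ab) = σ_ad(ba). -/
open Filter Topology

/-- An element of a complex Banach algebra is quasinilpotent if its spectrum is `{0}`. -/
def IsQuasinilpotent {A : Type*} [NormedRing A] [NormedAlgebra ℂ A] (b : A) : Prop :=
  spectrum ℂ b = {0}

/-- `a` is generalized Drazin invertible. -/
def IsGDrazinInv {A : Type*} [NormedRing A] [NormedAlgebra ℂ A] (a : A) : Prop :=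
  ∃ x : A, a * x = x * a ∧ x * a * x = x ∧ IsQuasinilpotent (a - a ^ 2 * x)

/-- `a ∈ A^acc`: `a - λ1` is generalized Drazin invertible for all nonzero `λ`. -/
def MemAcc {A : Type*} [NormedRing A] [NormedAlgebra ℂ A] (a : A) : Prop :=
  ∀ l : ℂ, l ≠ 0 → IsGDrazinInv (a - l • (1 : A))

/-- `x` is an ag-Drazin inverse of `a`. -/
def IsAgDrazinInverseOf {A : Type*} [NormedRing A] [NormedAlgebra ℂ A] (x a : A) : Prop :=
  a * x = x * a ∧ x * a * x = x ∧ MemAcc (a - a ^ 2 * x)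

/-- `a` is ag-Drazin invertible. -/
def IsAgDrazinInv {A : Type*} [NormedRing A] [NormedAlgebra ℂ A] (a : A) : Prop :=
  ∃ x : A, IsAgDrazinInverseOf x a

/-- The generalized Drazin spectrum. -/
def gDrazinSpectrum {A : Type*} [NormedRing A] [NormedAlgebra ℂ A] (a : A) : Set ℂ :=
  {l : ℂ | ¬ IsGDrazinInv (a - l • (1 : A))}

/-- The ag-Drazin spectrum. -/
def agDrazinSpectrum {A : Type*} [NormedRing A] [NormedAlgebra ℂ A] (a : A) : Set ℂ :=
  {l : ℂ | ¬ IsAgDrazinInv (a - l • (1 : A))}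

section alg
variable {R : Type*} [Ring R]

theorem lc {x y : R} (h : x * y = y * x) (z : R) : x * (y * z) = y * (x * z) := by
  rw [← mul_assoc, h, mul_assoc]

theorem lid {x y w : R} (h : x * y = w) (z : R) : x * (y * z) = w * z := by
  rw [← mul_assoc, h]

theorem phi_comm {f g α : R} (h : f * g = g * f) (h' : f * α = α * f) (h'' : g * α = α * g) :
    f * (1 - α) * g = g * (1 - α) * f := by
  simp only [mul_sub, sub_mul, mul_one, mul_assoc, h, lc h', lc h'']

theorem q1 {α p s : R} (h2 : α * p = p * α) (h3 : α * s = s * α) (h4 : p * s = s * p)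
    (hp : p * p = p) (hs : s * (1 - α * p) * s = s) :
    (p * s) * (1 - α) * (p * s) = p * s := by
  have : p * s = p * (s * (1 - α * p) * s) := by rw [hs]
  conv_rhs => rw [this]
  simp only [mul_sub, sub_mul, mul_one, mul_assoc, h2, h3, lc h2, lc h3, ← h4, ← lc h4, lid hp, hp]

theorem q2 {α p s : R} (h2 : α * p = p * α) (h3 : α * s = s * α) (h4 : p * s = s * p)
    (hp : p * p = p) (hs : s * (1 - α * p) * s = s) :
    (p * s) * (1 - α) * (p * (1 - (1 - α * p) * s)) = 0 := by
  have : p * (1 - α) * (s - s * (1 - α * p) * s) = 0 := by rw [hs]; simp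
  rw [← this]
  simp only [mul_sub, sub_mul, mul_one, one_mul, mul_assoc, h2, h3, lc h2, lc h3, ← h4, ← lc h4,
    lid hp, hp]
theorem q3 {α p s : R} (h2 : α * p = p * α) (h3 : α * s = s * α) (h4 : p * s = s * p)
    (hp : p * p = p) : (p * s) * (1 - α) * p = p - p * (1 - (1 - α * p) * s) := by
  simp only [mul_sub, sub_mul, mul_one, one_mul, mul_assoc, h2, h3, lc h2, lc h3, ← h4, ← lc h4,
    lid hp, hp]
  abel

theorem core {a b α x p s v : R} (hα : a * b = 1 - α) (h1 : Commute α x) (h2 : Commute α p)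
    (h3 : Commute α s) (h4 : Commute p s) (h5 : Commute x p) (h6 : Commute x s)
    (hx : α * x = 1 - p) (hp : p * p = p) (hs : s * (1 - α * p) * s = s)
    (hv1 : (1 - b * (p * (1 - (1 - α * p) * s)) * a) * v = 1)
    (hv2 : v * (1 - b * (p * (1 - (1 - α * p) * s)) * a) = 1) :
    ∃ y, (1 - b * a) * y = y * (1 - b * a) ∧ y * (1 - b * a) * y = y ∧
      (1 - b * a) - (1 - b * a) ^ 2 * y = b * (α * (p * s) * a) := by
  have φ : ∀ f g : R, (b * f * a) * (b * g * a) = b * (f * (1 - α) * g) * a := by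
    intro f g; rw [← hα]; noncomm_ring
  have φc : ∀ f g : R, Commute f g → Commute f α → Commute g α →
      Commute (b * f * a) (b * g * a) := by
    intro f g h h' h''
    show _ = _
    rw [φ, φ, phi_comm h h' h'']
  have hba : b * a = b * 1 * a := by simp
  have hm : ∀ t, Commute t α → Commute t p → Commute t s →
      Commute t (p * (1 - (1 - α * p) * s)) := by
    intro t ha hb hc
    exact hb.mul_right ((Commute.one_right t).sub_right
      (((Commute.one_right t).sub_right (ha.mul_right hb)).mul_right hc))
  set m := p * (1 - (1 - α * p) * s) with hmdef
  set w := b * m * a with hw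
  set q := b * (p * s) * a with hq
  have mα := (hm α (Commute.refl _) h2 h3).symm
  have qq : q * q = q := by rw [hq, φ, q1 h2 h3 h4 hp hs]
  have qw : q * w = 0 := by rw [hq, hw, φ, q2 h2 h3 h4 hp hs]; simp
  have cqw : Commute q w := φc _ _ (Commute.mul_left (hm p h2.symm (Commute.refl _) h4)
    (hm s h3.symm h4.symm (Commute.refl _))) (h2.mul_right h3).symm mα
  have cqB : Commute q (1 - b * a) := by
    rw [hba]
    exact (Commute.one_right _).sub_right (φc _ _ (Commute.one_right _) (h2.mul_right h3).symm
      (Commute.one_left _))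
  have cwB : Commute w (1 - b * a) := by
    rw [hba]
    exact (Commute.one_right _).sub_right (φc _ _ (Commute.one_right _) mα
      (Commute.one_left _))
  have ctB : Commute (1 + b * x * a) (1 - b * a) := by
    rw [hba]
    refine (Commute.one_right _).sub_right ((Commute.one_left _).add_left
      (φc _ _ (Commute.one_right _) h1.symm (Commute.one_left _)))
  have ctq : Commute (1 + b * x * a) q :=
    (Commute.one_left _).add_left
      (φc _ _ (h5.mul_right h6) h1.symm (h2.mul_right h3).symm)
  have ctw : Commute (1 + b * x * a) w :=
    (Commute.one_left _).add_left
      (φc _ _ (hm x h1.symm h5 h6) h1.symm mα)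
  have cv : ∀ t, Commute t w → Commute t v := by
    intro t ht
    have h : Commute t (1 - w) := (Commute.one_right _).sub_right ht
    exact Commute.units_inv_right (u := ⟨1 - w, v, hv1, hv2⟩) h
  have e1 : (1 - b * a) * (1 + b * x * a) = 1 - b * p * a := by
    have : b * (α * x) * a = b * (1 - p) * a := by rw [hx]
    have e := φ 1 x
    rw [mul_add, hba, mul_one, sub_mul 1 _ (b * x * a), e]
    rw [one_mul (b * x * a), one_mul (1 - α), sub_mul 1 α x, hx]
    noncomm_ring
  have e2 : (1 - q) * (1 - b * p * a) = (1 - q) * (1 - w) := by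
    have : q * (b * p * a) = b * p * a - w := by
      rw [hq, φ, q3 h2 h3 h4 hp, ← hmdef, hw]; noncomm_ring
    rw [mul_sub, mul_sub, sub_mul _ _ (b * p * a), this, sub_mul _ _ w, qw]
    noncomm_ring
  have ct1 : Commute (1 - q) (1 - b * a) := (Commute.one_left _).sub_left cqB
  have e3 : (1 - b * a) * ((1 - q) * (1 + b * x * a) * v) = 1 - q := by
    rw [← mul_assoc, ← mul_assoc, ← ct1.eq, mul_assoc (1 - q), e1, e2, mul_assoc, hv1, mul_one]
  have cB : Commute (1 - b * a) ((1 - q) * (1 + b * x * a) * v) :=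
    (ct1.symm.mul_right ctB.symm).mul_right (cv _ cwB.symm)
  have iq : (1 - q) * (1 - q) = 1 - q := by
    rw [mul_sub, sub_mul _ _ q, qq]; simp
  refine ⟨(1 - q) * (1 + b * x * a) * v, cB, ?_, ?_⟩
  · rw [← cB.eq, e3, ← mul_assoc, ← mul_assoc, iq]
  · rw [pow_two, mul_assoc, e3, mul_sub, mul_one, sub_sub_cancel, sub_mul, hba, hq, φ]
    noncomm_ring

theorem q4 {α p s : R} (h2 : α * p = p * α) (h3 : α * s = s * α) (h4 : p * s = s * p)
    (hp : p * p = p) : α * (p * s) * (1 - α) = ((1 - α * p) * s) * (α * p) := by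
  simp only [mul_sub, sub_mul, mul_one, one_mul, mul_assoc, h2, h3, lc h2, lc h3, ← h4, ← lc h4,
    lid hp, hp]

theorem q5 {α p s : R} (h2 : α * p = p * α) (h3 : α * s = s * α) (h4 : p * s = s * p)
    (hp : p * p = p) : (1 - α) * (p * (1 - (1 - α * p) * s)) =
      p * ((1 - α * p) - (1 - α * p) ^ 2 * s) := by
  simp only [pow_two, mul_sub, sub_mul, mul_one, one_mul, mul_assoc, h2, h3, lc h2, lc h3, ← h4,
    ← lc h4, lid hp, hp]

theorem comm_fin {c s u : R} (hc : c * s = s * c) (hs : s * c * s = s) (hu : u * c = c * u)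
    (k1 : (1 - c * s) * u * (c * s) = 0) (k2 : (c * s) * u * (1 - c * s) = 0) :
    u * s = s * u := by
  have es : c * s * s = s := by rw [hc, hs]
  have se : s * (c * s) = s := by rw [← mul_assoc, hs]
  have f1 : u * (c * s) = c * s * u * (c * s) := by
    rw [← sub_eq_zero, ← k1]; noncomm_ring
  have f2 : c * s * u = c * s * u * (c * s) := by
    rw [← sub_eq_zero, ← k2]; noncomm_ring
  calc u * s = u * (c * s) * s := by rw [mul_assoc, es]
    _ = c * s * u * s := by rw [f1, mul_assoc, es]
    _ = s * (u * (c * s)) := by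
      have : c * s * u = s * (u * c) := by rw [hc, mul_assoc s, ← hu]
      rw [this]; simp only [mul_assoc]
    _ = s * (c * s * u) := by rw [f1, ← f2]
    _ = s * u := by rw [← mul_assoc, se]

theorem comm_pre {c s u : R} (hc : c * s = s * c) (hs : s * c * s = s) (hu : u * c = c * u) :
    (c - c ^ 2 * s) * ((1 - c * s) * u * (c * s)) * s = (1 - c * s) * u * (c * s) ∧
    s * ((c * s) * u * (1 - c * s)) * (c - c ^ 2 * s) = (c * s) * u * (1 - c * s) := by
  have hs' : c * (s * s) = s := by rw [← mul_assoc, hc, hs]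
  have hs'' : s * (s * c) = s := by rw [← hc, ← mul_assoc, hs]
  have ee : (c * s) * (c * s) = c * s := by
    rw [mul_assoc, ← mul_assoc s, hs]
  have ii : (1 - c * s) * (1 - c * s) = 1 - c * s := by
    rw [mul_sub, sub_mul _ _ (c * s), ee]; simp
  have ce : c * (1 - c * s) = (1 - c * s) * c := by
    rw [mul_sub, sub_mul, mul_assoc c s c, ← hc]; simp
  have zz : c - c ^ 2 * s = (1 - c * s) * c := by rw [← ce, pow_two]; noncomm_ring
  rw [zz]
  constructor
  · calc (1 - c * s) * c * ((1 - c * s) * u * (c * s)) * s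
        = (1 - c * s) * (c * (1 - c * s)) * u * (c * s) * s := by simp only [mul_assoc]
      _ = (1 - c * s) * (1 - c * s) * (c * u) * (c * s) * s := by rw [ce]; simp only [mul_assoc]
      _ = (1 - c * s) * u * ((c * (c * s)) * s) := by rw [ii, ← hu]; simp only [mul_assoc]
      _ = _ := by rw [mul_assoc c (c * s) s, mul_assoc c s s, hs']
  · calc s * ((c * s) * u * (1 - c * s)) * ((1 - c * s) * c)
        = s * (c * s) * u * ((1 - c * s) * (1 - c * s) * c) := by simp only [mul_assoc]
      _ = s * (c * s) * (u * c) * (1 - c * s) := by rw [ii, ← ce]; simp only [mul_assoc]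
      _ = _ := by rw [hu, ← mul_assoc s c s, hs, hc]; simp only [mul_assoc]

end alg

section helpers
variable {A : Type*} [NormedRing A] [NormedAlgebra ℂ A]

def QN (z : A) : Prop := ∀ l : ℂ, l ≠ 0 → IsUnit (z - l • (1 : A))

theorem qn_iff [CompleteSpace A] [Nontrivial A] (z : A) : IsQuasinilpotent z ↔ QN z := by
  have key : ∀ l : ℂ, l ∈ spectrum ℂ z ↔ ¬ IsUnit (z - l • (1 : A)) := by
    intro l
    rw [spectrum.mem_iff, Algebra.algebraMap_eq_smul_one, ← IsUnit.neg_iff, neg_sub]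
  constructor
  · intro h l hl
    by_contra hu
    have := (key l).2 hu
    rw [IsQuasinilpotent] at h
    rw [h] at this
    exact hl this
  · intro h
    have hs : spectrum ℂ z ⊆ {0} := by
      intro l hl
      by_contra h0
      exact (key l).1 hl (h l h0)
    exact (Set.subset_singleton_iff_eq.1 hs).resolve_left (spectrum.nonempty z).ne_empty

theorem qn_flip {a b : A} (h : QN (a * b)) : QN (b * a) := by
  have key : ∀ (z : A) (l : ℂ), l ∈ spectrum ℂ z ↔ ¬ IsUnit (z - l • (1 : A)) := by
    intro z l
    rw [spectrum.mem_iff, Algebra.algebraMap_eq_smul_one, ← IsUnit.neg_iff, neg_sub]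
  intro l hl
  by_contra hu
  have h1 : l ∈ spectrum ℂ (b * a) \ {0} := ⟨(key _ l).2 hu, hl⟩
  rw [← spectrum.nonzero_mul_comm] at h1
  exact (key _ l).1 h1.1 (h l hl)

theorem T_mul {g X Y : A} (hg : g * g = g) (hX : g * X = X * g) (l m : ℂ) :
    (g * X - l • (1 - g)) * (g * Y - m • (1 - g)) = g * (X * Y) - (-(l * m)) • (1 - g) := by
  have o1 : g * (1 - g) = 0 := by rw [mul_sub, hg]; simp
  have o2 : (1 - g) * g = 0 := by rw [sub_mul, hg]; simp
  have o3 : (1 - g) * (1 - g) = 1 - g := by rw [sub_mul, o1]; simp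
  have p1 : (g * X) * (g * Y) = g * (X * Y) := by
    rw [hX, mul_assoc, ← mul_assoc g, hg, ← mul_assoc, ← hX, mul_assoc]
  have c1 : g * X * (1 - g) = 0 := by rw [hX, mul_assoc, o1, mul_zero]
  have c3 : (1 - g) * (g * Y) = 0 := by rw [← mul_assoc, o2, zero_mul]
  rw [sub_mul, mul_sub, mul_sub, p1, mul_smul_comm, c1, smul_mul_assoc, c3, smul_mul_smul_comm, o3]
  simp

theorem T_eq {g z : A} (l : ℂ) :
    g * z - l • (1 : A) = g * (z - l • (1 : A)) - l • (1 - g) := by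
  rw [mul_sub, mul_smul_comm, mul_one, smul_sub]; abel

theorem qn_idem {g z : A} (hg : g * g = g) (hc : g * z = z * g) (h : QN z) : QN (g * z) := by
  intro l hl
  obtain ⟨u, hu⟩ := h l hl
  have hgu : Commute g (u : A) := by
    rw [hu]
    exact (show Commute g z from hc).sub_right ((Commute.one_right g).smul_right l)
  have hgi : Commute g (↑u⁻¹ : A) := hgu.units_inv_right
  rw [T_eq, ← hu]
  refine ⟨⟨g * u - l • (1 - g), g * ↑u⁻¹ - l⁻¹ • (1 - g), ?_, ?_⟩, rfl⟩
  · rw [T_mul hg hgu.eq, mul_inv_cancel₀ hl, u.mul_inv]; simp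
  · rw [T_mul hg hgi.eq, inv_mul_cancel₀ hl, u.inv_mul]; simp

theorem qn_small [CompleteSpace A] [Nontrivial A] {z : A} (hz : QN z) (K : ℝ) (hK : 0 ≤ K) :
    ∃ n : ℕ, 0 < n ∧ ‖z ^ n‖ * K ^ n < 1 := by
  have h0 : spectralRadius ℂ z = 0 := by
    rw [spectralRadius, (qn_iff z).2 hz]; simp
  have ht := spectrum.pow_norm_pow_one_div_tendsto_nhds_spectralRadius z
  rw [h0] at ht
  have hpos : (0 : ENNReal) < ENNReal.ofReal (1 / (2 * (K + 1))) := by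
    rw [ENNReal.ofReal_pos]; positivity
  obtain ⟨n, hn, hn1⟩ := ((ht.eventually (gt_mem_nhds hpos)).and (eventually_ge_atTop 1)).exists
  have hn0 : n ≠ 0 := by omega
  refine ⟨n, by omega, ?_⟩
  have h1 : ‖z ^ n‖ ^ (1 / n : ℝ) < 1 / (2 * (K + 1)) :=
    (ENNReal.ofReal_lt_ofReal_iff (by positivity)).1 hn
  have h2 : ‖z ^ n‖ = (‖z ^ n‖ ^ (1 / n : ℝ)) ^ n := by
    rw [one_div, Real.rpow_inv_natCast_pow (norm_nonneg _) hn0]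
  rw [h2, ← mul_pow]
  apply pow_lt_one₀ (by positivity) _ hn0
  calc ‖z ^ n‖ ^ (1 / n : ℝ) * K ≤ 1 / (2 * (K + 1)) * K := by gcongr
    _ < 1 := by
      rw [div_mul_eq_mul_div, div_lt_one (by positivity)]; linarith

theorem qn_limit [CompleteSpace A] [Nontrivial A] {z h s : A} (hz : QN z) (e : z * h * s = h) :
    h = 0 := by
  obtain ⟨n, hn, hlt⟩ := qn_small hz ‖s‖ (norm_nonneg _)
  have hi : ∀ k : ℕ, z ^ k * h * s ^ k = h := by
    intro k
    induction k with
    | zero => simp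
    | succ k ih =>
      calc z ^ (k + 1) * h * s ^ (k + 1) = z ^ k * (z * h * s) * s ^ k := by
            rw [pow_succ, pow_succ']; simp only [mul_assoc]
        _ = h := by rw [e, ih]
  by_contra hne
  have hp : 0 < ‖h‖ := norm_pos_iff.2 hne
  have : ‖h‖ ≤ ‖z ^ n‖ * ‖h‖ * ‖s‖ ^ n := by
    calc ‖h‖ = ‖z ^ n * h * s ^ n‖ := by rw [hi]
      _ ≤ ‖z ^ n‖ * ‖h‖ * ‖s ^ n‖ := (norm_mul_le _ _).trans (by gcongr; exact norm_mul_le _ _)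
      _ ≤ _ := by gcongr; exact norm_pow_le' s hn
  nlinarith

theorem qn_limit' [CompleteSpace A] [Nontrivial A] {z h s : A} (hz : QN z) (e : s * h * z = h) :
    h = 0 := by
  obtain ⟨n, hn, hlt⟩ := qn_small hz ‖s‖ (norm_nonneg _)
  have hi : ∀ k : ℕ, s ^ k * h * z ^ k = h := by
    intro k
    induction k with
    | zero => simp
    | succ k ih =>
      calc s ^ (k + 1) * h * z ^ (k + 1) = s ^ k * (s * h * z) * z ^ k := by
            rw [pow_succ, pow_succ']; simp only [mul_assoc]
        _ = h := by rw [e, ih]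
  by_contra hne
  have hp : 0 < ‖h‖ := norm_pos_iff.2 hne
  have : ‖h‖ ≤ ‖s‖ ^ n * ‖h‖ * ‖z ^ n‖ := by
    calc ‖h‖ = ‖s ^ n * h * z ^ n‖ := by rw [hi]
      _ ≤ ‖s ^ n‖ * ‖h‖ * ‖z ^ n‖ := (norm_mul_le _ _).trans (by gcongr; exact norm_mul_le _ _)
      _ ≤ _ := by gcongr; exact norm_pow_le' s hn
  nlinarith

variable [CompleteSpace A] [Nontrivial A]

theorem comm_gd {c s u : A} (hc : c * s = s * c) (hs : s * c * s = s) (hq : QN (c - c ^ 2 * s))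
    (hu : u * c = c * u) : u * s = s * u := by
  obtain ⟨e1, e2⟩ := comm_pre hc hs hu
  exact comm_fin hc hs hu (qn_limit hq e1) (qn_limit' hq e2)

theorem gd_iff (a : A) : IsGDrazinInv a ↔
    ∃ x : A, a * x = x * a ∧ x * a * x = x ∧ QN (a - a ^ 2 * x) := by
  simp only [IsGDrazinInv, qn_iff]

theorem qn_smul {a : A} (t : ℂ) (ht : t ≠ 0) (h : QN a) : QN (t • a) := by
  intro l hl
  have := h (t⁻¹ * l) (mul_ne_zero (inv_ne_zero ht) hl)
  have e : t • a - l • (1 : A) = Units.mk0 t ht • (a - (t⁻¹ * l) • (1 : A)) := by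
    rw [Units.smul_mk0, smul_sub, smul_smul, mul_inv_cancel_left₀ ht]
  rw [e]
  exact this.smul _

theorem smul_aux {a x : A} (t : ℂ) (ht : t ≠ 0) (h1 : a * x = x * a) (h2 : x * a * x = x) :
    (t • a) * (t⁻¹ • x) = (t⁻¹ • x) * (t • a) ∧ (t⁻¹ • x) * (t • a) * (t⁻¹ • x) = t⁻¹ • x ∧
    t • a - (t • a) ^ 2 * (t⁻¹ • x) = t • (a - a ^ 2 * x) := by
  refine ⟨?_, ?_, ?_⟩
  · rw [smul_mul_smul_comm, smul_mul_smul_comm, h1, mul_comm]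
  · rw [smul_mul_smul_comm, smul_mul_smul_comm, h2, inv_mul_cancel₀ ht, one_mul]
  · rw [smul_pow, smul_mul_smul_comm, smul_sub]
    congr 2
    field_simp

theorem gd_smul {a : A} (t : ℂ) (ht : t ≠ 0) (h : IsGDrazinInv a) : IsGDrazinInv (t • a) := by
  rw [gd_iff] at h ⊢
  obtain ⟨x, h1, h2, h3⟩ := h
  obtain ⟨e1, e2, e3⟩ := smul_aux t ht h1 h2
  exact ⟨t⁻¹ • x, e1, e2, e3 ▸ qn_smul t ht h3⟩

theorem acc_smul {a : A} (t : ℂ) (ht : t ≠ 0) (h : MemAcc a) : MemAcc (t • a) := by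
  intro l hl
  have := gd_smul t ht (h (t⁻¹ * l) (mul_ne_zero (inv_ne_zero ht) hl))
  rwa [smul_sub, smul_smul, mul_inv_cancel_left₀ ht] at this

theorem agd_smul {a : A} (t : ℂ) (ht : t ≠ 0) (h : IsAgDrazinInv a) : IsAgDrazinInv (t • a) := by
  obtain ⟨x, h1, h2, h3⟩ := h
  obtain ⟨e1, e2, e3⟩ := smul_aux t ht h1 h2
  exact ⟨t⁻¹ • x, e1, e2, e3 ▸ acc_smul t ht h3⟩

theorem acc_idem {g c : A} (hg : g * g = g) (hc : g * c = c * g) (h : MemAcc c) :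
    MemAcc (g * c) := by
  intro l hl
  have hd := h l hl
  rw [gd_iff] at hd ⊢
  rw [T_eq]
  have hgd : g * (c - l • (1 : A)) = (c - l • (1 : A)) * g :=
    ((show Commute g c from hc).sub_right ((Commute.one_right g).smul_right l)).eq
  generalize c - l • (1 : A) = d at *
  obtain ⟨s, h1, h2, h3⟩ := hd
  have hgs : g * s = s * g := comm_gd h1 h2 h3 hgd
  refine ⟨g * s - l⁻¹ • (1 - g), ?_, ?_, ?_⟩
  · rw [T_mul hg hgd, T_mul hg hgs, h1, mul_comm l]
  · have hgsd : g * (s * d) = s * d * g := (Commute.mul_right hgs hgd).eq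
    rw [T_mul hg hgs, T_mul hg hgsd, h2]
    congr 2
    field_simp
  · have hgdd : g * (d * d) = d * d * g := (Commute.mul_right hgd hgd).eq
    rw [pow_two, T_mul hg hgd, T_mul hg hgdd]
    have e : -(-(l * l) * l⁻¹) = l := by field_simp
    rw [e, sub_sub_sub_cancel_right, ← mul_sub, ← pow_two]
    refine qn_idem hg ?_ h3
    exact ((show Commute g d from hgd).sub_right
      (((show Commute g d from hgd).pow_right 2).mul_right hgs)).eq

theorem jac_aux {α x : A} (h1 : α * x = x * α) (h2 : x * α * x = x) :
    Commute α x ∧ Commute α (1 - α * x) ∧ Commute x (1 - α * x) ∧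
    (1 - α * x) * (1 - α * x) = 1 - α * x ∧ α - α ^ 2 * x = α * (1 - α * x) := by
  have c : Commute α x := h1
  refine ⟨c, (Commute.one_right _).sub_right ((Commute.refl _).mul_right c),
    (Commute.one_right _).sub_right (c.symm.mul_right (Commute.refl _)), ?_, ?_⟩
  · have : (α * x) * (α * x) = α * x := by rw [mul_assoc, ← mul_assoc x, h2]
    rw [mul_sub, sub_mul _ _ (α * x), this]; simp
  · rw [pow_two]; noncomm_ring

theorem gd_jac {a b : A} (h : IsGDrazinInv (1 - a * b)) : IsGDrazinInv (1 - b * a) := by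
  rw [gd_iff] at h ⊢
  have hα : a * b = 1 - (1 - a * b) := by simp
  generalize 1 - a * b = α at *
  obtain ⟨x, h1, h2, h3⟩ := h
  obtain ⟨cx, cp, cxp, hp, hz⟩ := jac_aux h1 h2
  rw [hz] at h3
  have hx : α * x = 1 - (1 - α * x) := by simp
  generalize 1 - α * x = p at *
  obtain ⟨u, hu⟩ : IsUnit (1 - α * p) := by
    have := h3 1 one_ne_zero
    rw [one_smul, ← IsUnit.neg_iff, neg_sub] at this
    exact this
  have cs : ∀ t, Commute t α → Commute t p → Commute t (↑u⁻¹ : A) := by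
    intro t ha hb
    apply Commute.units_inv_right
    rw [hu]
    exact (Commute.one_right _).sub_right (ha.mul_right hb)
  have e1 : (1 - α * p) * (↑u⁻¹ : A) = 1 := by rw [← hu, u.mul_inv]
  have e2 : (↑u⁻¹ : A) * (1 - α * p) = 1 := by rw [← hu, u.inv_mul]
  have c3 := cs α (Commute.refl _) cp
  have c4 := cs p cp.symm (Commute.refl _)
  have c6 := cs x cx.symm cxp
  obtain ⟨y, y1, y2, y3⟩ := core (v := 1) hα cx cp c3 c4 cxp c6 hx hp
    (by rw [e2, one_mul]) (by rw [e1]; simp) (by rw [e1]; simp)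
  refine ⟨y, y1, y2, ?_⟩
  rw [y3]
  apply qn_flip
  rw [mul_assoc _ a b, hα, q4 cp c3 c4 hp, e1, one_mul]
  exact h3

theorem scale_eq (a b : A) (l : ℂ) (hl : l ≠ 0) :
    a * b - l • (1 : A) = (-l) • (1 - (l⁻¹ • a) * b) ∧
    1 - (l⁻¹ • a) * b = (-l⁻¹) • (a * b - l • (1 : A)) ∧
    b * a - l • (1 : A) = (-l) • (1 - b * (l⁻¹ • a)) := by
  refine ⟨?_, ?_, ?_⟩
  · rw [smul_mul_assoc, smul_sub, smul_smul, neg_mul, mul_inv_cancel₀ hl]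
    simp only [neg_smul, one_smul]; abel
  · rw [smul_mul_assoc, smul_sub, smul_smul, neg_mul, inv_mul_cancel₀ hl]
    simp only [neg_smul, one_smul]; abel
  · rw [mul_smul_comm, smul_sub, smul_smul, neg_mul, mul_inv_cancel₀ hl]
    simp only [neg_smul, one_smul]; abel

theorem acc_flip {a b : A} (h : MemAcc (a * b)) : MemAcc (b * a) := by
  intro l hl
  obtain ⟨e1, e2, e3⟩ := scale_eq a b l hl
  rw [e3]
  apply gd_smul _ (neg_ne_zero.2 hl)
  apply gd_jac
  rw [e2]
  exact gd_smul _ (neg_ne_zero.2 (inv_ne_zero hl)) (h l hl)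

theorem agd_jac {a b : A} (h : IsAgDrazinInv (1 - a * b)) : IsAgDrazinInv (1 - b * a) := by
  have hα : a * b = 1 - (1 - a * b) := by simp
  generalize 1 - a * b = α at *
  obtain ⟨x, h1, h2, h3⟩ := h
  obtain ⟨cx, cp, cxp, hp, hz⟩ := jac_aux h1 h2
  rw [hz] at h3
  have hx : α * x = 1 - (1 - α * x) := by simp
  generalize 1 - α * x = p at *
  have hgd : IsGDrazinInv (1 - α * p) := by
    have := gd_smul (-1) (by simp) (h3 1 one_ne_zero)
    rwa [one_smul, neg_smul, one_smul, neg_sub] at this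
  rw [gd_iff] at hgd
  obtain ⟨s, s1, s2, s3⟩ := hgd
  have cs : ∀ t, Commute t α → Commute t p → Commute t s := by
    intro t ha hb
    exact comm_gd s1 s2 s3 ((Commute.one_right _).sub_right (ha.mul_right hb)).eq
  have c3 := cs α (Commute.refl _) cp
  have c4 := cs p cp.symm (Commute.refl _)
  have c6 := cs x cx.symm cxp
  have hw : QN (b * (p * (1 - (1 - α * p) * s)) * a) := by
    apply qn_flip
    rw [← mul_assoc a b, hα, q5 cp c3 c4 hp]
    refine qn_idem hp ?_ s3
    have c : Commute p (1 - α * p) :=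
      (Commute.one_right _).sub_right (cp.symm.mul_right (Commute.refl _))
    exact (c.sub_right ((c.pow_right 2).mul_right c4)).eq
  obtain ⟨u, hu⟩ : IsUnit (1 - b * (p * (1 - (1 - α * p) * s)) * a) := by
    have := hw 1 one_ne_zero
    rw [one_smul, ← IsUnit.neg_iff, neg_sub] at this
    exact this
  obtain ⟨y, y1, y2, y3⟩ := core (v := (↑u⁻¹ : A)) hα cx cp c3 c4 cxp c6 hx hp
    s2 (by rw [← hu, u.mul_inv]) (by rw [← hu, u.inv_mul])
  refine ⟨y, y1, y2, ?_⟩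
  rw [y3]
  apply acc_flip
  rw [mul_assoc _ a b, hα, q4 cp c3 c4 hp]
  refine acc_idem ?_ ?_ h3
  · rw [mul_assoc, ← mul_assoc s, s2]
  · have c : Commute (α * p) (1 - α * p) := (Commute.one_right _).sub_right (Commute.refl _)
    exact (c.mul_right (c3.mul_left c4)).symm.eq

theorem agd_cline {a b : A} (h : IsAgDrazinInv (a * b)) : IsAgDrazinInv (b * a) := by
  obtain ⟨x, h1, h2, h3⟩ := h
  have k : a * b * x * x = x := by rw [h1, h2]
  refine ⟨b * (x * x) * a, ?_, ?_, ?_⟩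
  · calc b * a * (b * (x * x) * a) = b * (a * b * x * x) * a := by simp only [mul_assoc]
      _ = b * (x * (a * b) * x) * a := by rw [h1]
      _ = b * (x * (a * b * x)) * a := by simp only [mul_assoc]
      _ = b * (x * (x * (a * b))) * a := by rw [h1]
      _ = _ := by simp only [mul_assoc]
  · calc b * (x * x) * a * (b * a) * (b * (x * x) * a)
          = b * (x * x) * (a * b * (a * b * x * x)) * a := by simp only [mul_assoc]
      _ = b * (x * (x * (a * b) * x)) * a := by rw [k]; simp only [mul_assoc]
      _ = _ := by rw [h2]
  · have e : b * a - (b * a) ^ 2 * (b * (x * x) * a) = b * ((1 - a * b * x) * a) := by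
      calc b * a - (b * a) ^ 2 * (b * (x * x) * a)
          = b * a - b * (a * b * (a * b * x * x)) * a := by rw [pow_two]; simp only [mul_assoc]
        _ = _ := by rw [k]; noncomm_ring
    rw [e]
    apply acc_flip
    have e' : (1 - a * b * x) * a * b = a * b - (a * b) ^ 2 * x := by
      calc (1 - a * b * x) * a * b = a * b - a * b * (x * (a * b)) := by noncomm_ring
        _ = _ := by rw [← h1, pow_two]; simp only [mul_assoc]
    rw [e']
    exact h3

theorem agd_flip {a b : A} (l : ℂ) (h : IsAgDrazinInv (a * b - l • (1 : A))) :
    IsAgDrazinInv (b * a - l • (1 : A)) := by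
  by_cases hl : l = 0
  · subst hl
    simp only [zero_smul, sub_zero] at *
    exact agd_cline h
  obtain ⟨e1, e2, e3⟩ := scale_eq a b l hl
  rw [e3]
  apply agd_smul _ (neg_ne_zero.2 hl)
  apply agd_jac
  rw [e2]
  exact agd_smul _ (neg_ne_zero.2 (inv_ne_zero hl)) h

end helpers

theorem agDrazinSpectrum_mul_comm {A : Type*} [NormedRing A] [NormedAlgebra ℂ A]
    [CompleteSpace A] (a b : A) :
    agDrazinSpectrum (a * b) = agDrazinSpectrum (b * a) := by
  cases subsingleton_or_nontrivial A
  · rw [Subsingleton.elim (a * b) (b * a)]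
  · ext l
    exact not_congr ⟨agd_flip l, agd_flip l⟩
end

section
/- Let A be a complex unital Banach algebra, let a ∈ A be ag-Drazin invertible, and let b ∈ A be quasinilpotent with ab = ba. Then a + b is ag-Drazin invertible. -/
open Filter Topology

section helpers
open scoped NNReal ENNReal
set_option linter.unusedSectionVars false

variable {A : Type*} [NormedRing A] [NormedAlgebra ℂ A]

lemma qn_iff_s15 [CompleteSpace A] [Nontrivial A] (b : A) :
    IsQuasinilpotent b ↔ ∀ l : ℂ, l ≠ 0 → IsUnit (b - l • (1 : A)) := by
  unfold IsQuasinilpotent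
  constructor
  · intro h l hl
    have : l ∉ spectrum ℂ b := by rw [h]; simpa using hl
    rw [spectrum.notMem_iff, Algebra.algebraMap_eq_smul_one] at this
    rw [← IsUnit.neg_iff]; simpa using this
  · intro h
    have hsub : spectrum ℂ b ⊆ {0} := by
      intro l hl
      by_contra hne
      have := h l (by simpa using hne)
      rw [← IsUnit.neg_iff] at this
      apply hl
      rw [spectrum.mem_resolventSet_iff, Algebra.algebraMap_eq_smul_one]
      simpa using this
    exact (Set.subset_singleton_iff_eq.1 hsub).resolve_left (spectrum.nonempty b).ne_empty

lemma qn_radius (b : A) (hb : IsQuasinilpotent b) : spectralRadius ℂ b = 0 := by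
  unfold IsQuasinilpotent at hb
  simp [spectralRadius, hb]

lemma eventually_pow_lt [CompleteSpace A] (s : A) (r : ℝ≥0) (h : spectralRadius ℂ s < r) :
    ∃ n : ℕ, n ≠ 0 ∧ ‖s ^ n‖₊ < r ^ n := by
  have h1 := (spectrum.pow_nnnorm_pow_one_div_tendsto_nhds_spectralRadius s).eventually_lt_const h
  obtain ⟨n, hn, hn0⟩ := (h1.and (eventually_ne_atTop 0)).exists
  refine ⟨n, hn0, ?_⟩
  have hpos : (0:ℝ) < n := by positivity
  have := ENNReal.rpow_lt_rpow hn hpos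
  rw [← ENNReal.rpow_mul, one_div, inv_mul_cancel₀ hpos.ne', ENNReal.rpow_one,
    ENNReal.rpow_natCast] at this
  exact_mod_cast this

lemma iter_eq {S X T : A} (h : S * X * T = X) (n : ℕ) : S ^ n * X * T ^ n = X := by
  induction n with
  | zero => simp
  | succ n ih =>
    calc S ^ (n+1) * X * T ^ (n+1) = S ^ n * (S * X * T) * T ^ n := by
          rw [pow_succ, pow_succ']; simp only [mul_assoc]
      _ = X := by rw [h, ih]

lemma zero_of_left [CompleteSpace A] {S X T : A} (r : ℝ≥0) (hS : spectralRadius ℂ S < r)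
    (hT : ‖T‖₊ * r ≤ 1) (h : S * X * T = X) : X = 0 := by
  obtain ⟨n, hn0, hn⟩ := eventually_pow_lt S r hS
  by_contra hX
  have hX' : 0 < ‖X‖₊ := by simpa [pos_iff_ne_zero] using hX
  have h1 : ‖X‖₊ ≤ ‖S ^ n‖₊ * ‖X‖₊ * ‖T‖₊ ^ n := by
    calc ‖X‖₊ = ‖S ^ n * X * T ^ n‖₊ := by rw [iter_eq h]
      _ ≤ ‖S ^ n‖₊ * ‖X‖₊ * ‖T ^ n‖₊ := (nnnorm_mul_le _ _).trans
          (by gcongr; exact nnnorm_mul_le _ _)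
      _ ≤ _ := by gcongr; exact nnnorm_pow_le' _ (Nat.pos_of_ne_zero hn0)
  rcases eq_or_ne ‖T‖₊ 0 with hT0 | hT0
  · rw [hT0, zero_pow hn0, mul_zero] at h1
    exact absurd h1 (not_le.2 hX')
  have hTp : 0 < ‖T‖₊ := pos_iff_ne_zero.2 hT0
  have h2 : ‖S ^ n‖₊ * ‖X‖₊ * ‖T‖₊ ^ n < r ^ n * ‖X‖₊ * ‖T‖₊ ^ n := by gcongr
  have h3 : r ^ n * ‖X‖₊ * ‖T‖₊ ^ n ≤ ‖X‖₊ := by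
    calc r ^ n * ‖X‖₊ * ‖T‖₊ ^ n = (‖T‖₊ * r) ^ n * ‖X‖₊ := by ring
      _ ≤ 1 * ‖X‖₊ := by gcongr; exact pow_le_one' hT n
      _ = _ := one_mul _
  exact lt_irrefl _ (h1.trans_lt (h2.trans_le h3))

lemma zero_of_right [CompleteSpace A] {S X T : A} (r : ℝ≥0) (hS : spectralRadius ℂ S < r)
    (hT : ‖T‖₊ * r ≤ 1) (h : T * X * S = X) : X = 0 := by
  obtain ⟨n, hn0, hn⟩ := eventually_pow_lt S r hS
  by_contra hX
  have hX' : 0 < ‖X‖₊ := by simpa [pos_iff_ne_zero] using hX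
  have h1 : ‖X‖₊ ≤ ‖T‖₊ ^ n * ‖X‖₊ * ‖S ^ n‖₊ := by
    calc ‖X‖₊ = ‖T ^ n * X * S ^ n‖₊ := by rw [iter_eq h]
      _ ≤ ‖T ^ n‖₊ * ‖X‖₊ * ‖S ^ n‖₊ := (nnnorm_mul_le _ _).trans
          (by gcongr; exact nnnorm_mul_le _ _)
      _ ≤ _ := by gcongr; exact nnnorm_pow_le' _ (Nat.pos_of_ne_zero hn0)
  rcases eq_or_ne ‖T‖₊ 0 with hT0 | hT0
  · rw [hT0, zero_pow hn0, zero_mul, zero_mul] at h1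
    exact absurd h1 (not_le.2 hX')
  have hTp : 0 < ‖T‖₊ := pos_iff_ne_zero.2 hT0
  have h2 : ‖T‖₊ ^ n * ‖X‖₊ * ‖S ^ n‖₊ < ‖T‖₊ ^ n * ‖X‖₊ * r ^ n := by gcongr
  have h3 : ‖T‖₊ ^ n * ‖X‖₊ * r ^ n ≤ ‖X‖₊ := by
    calc ‖T‖₊ ^ n * ‖X‖₊ * r ^ n = (‖T‖₊ * r) ^ n * ‖X‖₊ := by ring
      _ ≤ 1 * ‖X‖₊ := by gcongr; exact pow_le_one' hT n
      _ = _ := one_mul _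
  exact lt_irrefl _ (h1.trans_lt (h2.trans_le h3))

lemma exists_r (T : A) : ∃ r : ℝ≥0, 0 < r ∧ ‖T‖₊ * r ≤ 1 := by
  refine ⟨(‖T‖₊ + 1)⁻¹, by positivity, ?_⟩
  rw [← div_eq_mul_inv]
  exact div_le_one_of_le₀ (by simp) (by positivity)

lemma qzero_left [CompleteSpace A] {S X T : A} (hS : IsQuasinilpotent S)
    (h : S * X * T = X) : X = 0 := by
  obtain ⟨r, hr, hr'⟩ := exists_r T
  exact zero_of_left r (by rw [qn_radius S hS]; exact_mod_cast hr) hr' h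

lemma qzero_right [CompleteSpace A] {S X T : A} (hS : IsQuasinilpotent S)
    (h : T * X * S = X) : X = 0 := by
  obtain ⟨r, hr, hr'⟩ := exists_r T
  exact zero_of_right r (by rw [qn_radius S hS]; exact_mod_cast hr) hr' h

/-- quasinilpotent times commuting -/
lemma isUnit_one_add_mul [CompleteSpace A] {b t : A} (hb : IsQuasinilpotent b)
    (h : Commute b t) : IsUnit (1 + b * t) := by
  obtain ⟨r, hr, hr'⟩ := exists_r t
  obtain ⟨n, hn0, hn⟩ := eventually_pow_lt b r (by rw [qn_radius b hb]; exact_mod_cast hr)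
  have hlt : ‖(-(b * t)) ^ n‖ < 1 := by
    have : ‖(-(b * t)) ^ n‖₊ < 1 := by
      have e1 : ‖(-(b * t)) ^ n‖₊ = ‖b ^ n * t ^ n‖₊ := by
        rcases neg_one_pow_eq_or A n with h' | h' <;> rw [neg_pow, h', h.mul_pow] <;> simp
      rw [e1]
      calc ‖b ^ n * t ^ n‖₊ ≤ ‖b ^ n‖₊ * ‖t ^ n‖₊ := nnnorm_mul_le _ _
        _ ≤ ‖b ^ n‖₊ * ‖t‖₊ ^ n := by gcongr; exact nnnorm_pow_le' _ (Nat.pos_of_ne_zero hn0)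
        _ < 1 := by
          rcases eq_or_ne ‖t‖₊ 0 with hT0 | hT0
          · rw [hT0, zero_pow hn0]; simp
          have hTp : 0 < ‖t‖₊ := pos_iff_ne_zero.2 hT0
          calc ‖b ^ n‖₊ * ‖t‖₊ ^ n < r ^ n * ‖t‖₊ ^ n := by gcongr
            _ = (‖t‖₊ * r) ^ n := by ring
            _ ≤ 1 := pow_le_one' hr' n
    exact_mod_cast this
  have hu : IsUnit (1 - (-(b * t)) ^ n) := isUnit_one_sub_of_norm_lt_one hlt
  have e2 := mul_neg_geom_sum (-(b * t)) n
  have e3 := (Commute.refl (1 - -(b * t)))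
  rw [← e2] at hu
  have hc : Commute (1 - -(b * t)) (∑ i ∈ Finset.range n, (-(b * t)) ^ i) :=
    Commute.sum_right _ _ _ fun i _ =>
      (((Commute.one_left _).sub_left (Commute.refl _)).pow_right i)
  have := (hc.isUnit_mul_iff.1 hu).1
  simpa using this

lemma isUnit_inv {s : A} (h : IsUnit s) : ∃ z : A, s * z = 1 ∧ z * s = 1 ∧
    ∀ t, Commute t s → Commute t z := by
  obtain ⟨u, rfl⟩ := h
  exact ⟨↑u⁻¹, by simp, by simp, fun t ht => ht.units_inv_right⟩

lemma isUnit_add_qn [CompleteSpace A] {s b : A} (hs : IsUnit s) (hb : IsQuasinilpotent b)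
    (h : Commute b s) : IsUnit (s + b) := by
  obtain ⟨z, h1, h2, h3⟩ := isUnit_inv hs
  have := hs.mul (isUnit_one_add_mul hb (h3 b h))
  rwa [mul_add, mul_one, ← mul_assoc, ← h.eq, mul_assoc, h1, mul_one] at this

lemma isUnit_smul_one {l : ℂ} (hl : l ≠ 0) : IsUnit (l • (1 : A)) := by
  rw [← Algebra.algebraMap_eq_smul_one]
  exact (IsUnit.mk0 l hl).map (algebraMap ℂ A)

lemma qn_add [CompleteSpace A] [Nontrivial A] {s b : A} (hs : IsQuasinilpotent s)
    (hb : IsQuasinilpotent b) (h : Commute b s) : IsQuasinilpotent (s + b) := by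
  rw [qn_iff_s15]
  intro l hl
  have h1 := (qn_iff_s15 s).1 hs l hl
  have := isUnit_add_qn h1 hb (h.sub_right ((Commute.one_right b).smul_right l))
  convert this using 1; abel

lemma qn_mul [CompleteSpace A] [Nontrivial A] {b t : A} (hb : IsQuasinilpotent b)
    (h : Commute b t) : IsQuasinilpotent (b * t) := by
  rw [qn_iff_s15]
  intro l hl
  have := isUnit_one_add_mul hb ((h.smul_right (-l⁻¹)))
  have := (isUnit_smul_one (A := A) (neg_ne_zero.2 hl)).mul this
  convert this using 1
  simp [smul_smul, hl, mul_add]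
  abel

/-- facts about an inner inverse -/
lemma gi_facts {c y : A} (h1 : Commute c y) (h2 : y * c * y = y) :
    y * c = c * y ∧ (c * y) * (c * y) = c * y ∧ (c * y) * y = y ∧ y * (c * y) = y ∧
    c * (1 - c * y) = (1 - c * y) * c ∧ c - c ^ 2 * y = c * (1 - c * y) ∧
    (1 - c * y) * (1 - c * y) = 1 - c * y ∧ (1 - c * y) * y = 0 ∧ y * (1 - c * y) = 0 := by
  have a1 : y * c = c * y := h1.symm.eq
  have a2 : (c * y) * (c * y) = c * y := by rw [mul_assoc, ← mul_assoc y, h2]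
  have a3 : (c * y) * y = y := by rw [← a1, h2]
  have a4 : y * (c * y) = y := by rw [← mul_assoc, h2]
  have a5 : c * (c * y) = (c * y) * c := by rw [mul_assoc, a1]
  refine ⟨a1, a2, a3, a4, ?_, ?_, ?_, ?_, ?_⟩
  · rw [mul_sub, sub_mul, a5, one_mul, mul_one]
  · rw [mul_sub, mul_one, pow_two, mul_assoc]
  · rw [mul_sub, sub_mul _ _ (c * y), a2]; simp
  · rw [sub_mul, a3]; simp
  · rw [mul_sub, a4]; simp

lemma comm_of_comm_idem {c y t : A} (h1 : Commute c y) (h2 : y * c * y = y)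
    (ht : Commute t c) (hf : Commute t (c * y)) : Commute t y := by
  obtain ⟨a1, a2, a3, a4, -⟩ := gi_facts h1 h2
  calc t * y = t * (c * y) * y := by rw [mul_assoc, a3]
    _ = (y * c) * t * y := by rw [hf.eq, a1]
    _ = y * (t * c) * y := by rw [ht.eq]; simp only [mul_assoc]
    _ = y * (t * (c * y)) := by simp only [mul_assoc]
    _ = y * (c * y) * t := by rw [hf.eq]; simp only [mul_assoc]
    _ = y * t := by rw [a4]

lemma gd_bicomm [CompleteSpace A] {c y t : A} (h1 : Commute c y) (h2 : y * c * y = y)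
    (hq : IsQuasinilpotent (c - c ^ 2 * y)) (ht : Commute t c) : Commute t y := by
  obtain ⟨a1, a2, a3, a4, a5, a6, a7, -⟩ := gi_facts h1 h2
  apply comm_of_comm_idem h1 h2 ht
  rw [a6] at hq
  set f := c * y with hf
  set e := 1 - f with he
  have z1 : e * t * f = 0 := by
    apply qzero_left (T := y) hq
    calc c * e * (e * t * f) * y = c * (e * e) * t * (f * y) := by simp only [mul_assoc]
      _ = e * (c * t) * y := by rw [a7, a3, a5]; simp only [mul_assoc]
      _ = e * t * (c * y) := by rw [← ht.eq]; simp only [mul_assoc]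
  have z2 : f * t * e = 0 := by
    apply qzero_right (T := y) hq
    calc y * (f * t * e) * (c * e) = (y * f) * t * (e * c) * e := by simp only [mul_assoc]
      _ = y * (t * c) * (e * e) := by rw [a4, ← a5]; simp only [mul_assoc]
      _ = (y * c) * t * e := by rw [a7, ht.eq]; simp only [mul_assoc]
      _ = f * t * e := by rw [a1]
  have z1' : t * f = f * t * f := by
    rw [he] at z1; rw [← sub_eq_zero, ← z1]; simp only [sub_mul, one_mul]
  have z2' : f * t = f * t * f := by
    rw [he] at z2; rw [← sub_eq_zero, ← z2]; simp only [mul_sub, mul_one]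
  exact z1'.trans z2'.symm

lemma perturb [CompleteSpace A] {a v b : A} (h1 : Commute a v) (h2 : v * a * v = v)
    (hb : IsQuasinilpotent b) (hab : Commute b a) (hbv : Commute b v) :
    ∃ x, Commute (a + b) x ∧ x * (a + b) * x = x ∧
      (a + b) - (a + b) ^ 2 * x = (a - a ^ 2 * v) + b * (1 - a * v) := by
  obtain ⟨a1, a2, a3, a4, -⟩ := gi_facts h1 h2
  obtain ⟨z, z1, z2, z3⟩ := isUnit_inv (isUnit_one_add_mul hb hbv)
  have hza : Commute a z := z3 a ((Commute.one_right a).add_right (hab.symm.mul_right h1))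
  have hzb : Commute b z := z3 b ((Commute.one_right b).add_right ((Commute.refl b).mul_right hbv))
  have hzv : Commute v z := z3 v ((Commute.one_right v).add_right (hbv.symm.mul_right (Commute.refl v)))
  have hc : Commute (a + b) (v * z) :=
    ((h1.mul_right hza).add_left (hbv.mul_right hzb))
  have hf : (a + b) * (v * z) = a * v := by
    have : (a + b) * v = a * v * (1 + b * v) := by
      have : a * v * (b * v) = b * v := by
        rw [← mul_assoc, mul_assoc a, ← hbv.eq, ← mul_assoc, ← hab.eq, mul_assoc, mul_assoc, ← mul_assoc a, a3]
      rw [mul_add, this, add_mul, mul_one]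
    rw [← mul_assoc, this, mul_assoc, z1, mul_one]
  refine ⟨v * z, hc, ?_, ?_⟩
  · rw [← hc.eq, hf, ← mul_assoc, a3]
  · rw [pow_two, mul_assoc, hf, pow_two, mul_sub, add_mul, mul_one, mul_assoc]; abel

lemma gd_add [CompleteSpace A] [Nontrivial A] {c b : A} (hc : IsGDrazinInv c)
    (hb : IsQuasinilpotent b) (h : Commute b c) : IsGDrazinInv (c + b) := by
  obtain ⟨y, h1, h2, hq⟩ := hc
  have hby := gd_bicomm h1 h2 hq h
  obtain ⟨x, x1, x2, x3⟩ := perturb h1 h2 hb h hby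
  refine ⟨x, x1, x2, ?_⟩
  rw [x3]
  have hbc : Commute b (1 - c * y) := (Commute.one_right b).sub_right (h.mul_right hby)
  apply qn_add hq (qn_mul hb hbc)
  have k1 : Commute c (1 - c * y) := (Commute.one_right c).sub_right ((Commute.refl c).mul_right h1)
  have k2 : Commute y (1 - c * y) := (Commute.one_right y).sub_right
    ((Commute.symm h1).mul_right (Commute.refl y))
  exact ((h.sub_right ((h.pow_right 2).mul_right hby))).mul_left
    ((k1.symm.sub_right ((k1.symm.pow_right 2).mul_right k2.symm)))

lemma acc_add [CompleteSpace A] [Nontrivial A] {c b : A} (hc : MemAcc c)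
    (hb : IsQuasinilpotent b) (h : Commute b c) : MemAcc (c + b) := by
  intro l hl
  have := gd_add (hc l hl) hb (h.sub_right ((Commute.one_right b).smul_right l))
  convert this using 1; abel

lemma acc_mul [CompleteSpace A] [Nontrivial A] {w g : A} (hw : MemAcc w)
    (hg : g * g = g) (h : Commute g w) : MemAcc (w * g) := by
  intro l hl
  obtain ⟨y, h1, h2, hq⟩ := hw l hl
  have hgc : Commute g (w - l • 1) := h.sub_right ((Commute.one_right g).smul_right l)
  have hgy := gd_bicomm h1 h2 hq hgc
  set c := w - l • (1 : A) with hc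
  have hw' : w * g - l • 1 = c * g - l • (1 - g) := by
    rw [hc, sub_mul, smul_sub, smul_mul_assoc, one_mul]; abel
  have hgz : g * (1 - g) = 0 := by rw [mul_sub, hg]; simp
  have hzg : (1 - g) * g = 0 := by rw [sub_mul, hg]; simp
  have hzz : (1 - g) * (1 - g) = 1 - g := by rw [mul_sub, hzg]; simp
  generalize 1 - g = k at hw' hgz hzg hzz
  have e1 : (c * g - l • k) * (y * g - l⁻¹ • k) = c * y * g + k := by
    have t1 : c * g * (y * g) = c * y * g := by
      rw [← hgy.eq, mul_assoc, ← mul_assoc g g, hg, hgy.eq, mul_assoc]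
    have t2 : c * g * k = 0 := by rw [mul_assoc, hgz, mul_zero]
    have t3 : k * (y * g) = 0 := by rw [← hgy.eq, ← mul_assoc, hzg, zero_mul]
    simp only [sub_mul, mul_sub, mul_smul_comm, smul_mul_assoc, t1, t2, t3, hzz,
      smul_zero, smul_smul]
    simp [hl]
  have e2 : (y * g - l⁻¹ • k) * (c * g - l • k) = c * y * g + k := by
    have t1 : y * g * (c * g) = c * y * g := by
      rw [← hgc.eq, mul_assoc, ← mul_assoc g g, hg, hgc.eq, ← mul_assoc, h1]
    have t2 : y * g * k = 0 := by rw [mul_assoc, hgz, mul_zero]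
    have t3 : k * (c * g) = 0 := by rw [← hgc.eq, ← mul_assoc, hzg, zero_mul]
    simp only [sub_mul, mul_sub, mul_smul_comm, smul_mul_assoc, t1, t2, t3, hzz,
      smul_zero, smul_smul]
    simp [hl]
  have hgf : Commute g (c * y) := hgc.mul_right hgy
  have hq' : IsQuasinilpotent ((c - c ^ 2 * y) * g) :=
    qn_mul hq ((hgc.sub_right ((hgc.pow_right 2).mul_right hgy)).symm)
  rw [hw']
  refine ⟨y * g - l⁻¹ • k, e1.trans e2.symm, ?_, ?_⟩
  · obtain ⟨a1, a2, a3, a4, -⟩ := gi_facts h1 h2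
    rw [e2]
    have t1 : c * y * g * (y * g) = y * g := by
      rw [← hgy.eq, mul_assoc, ← mul_assoc g g, hg, hgy.eq, ← mul_assoc, a3]
    have t2 : c * y * g * k = 0 := by rw [mul_assoc, hgz, mul_zero]
    have t3 : k * (y * g) = 0 := by rw [← hgy.eq, ← mul_assoc, hzg, zero_mul]
    simp only [add_mul, mul_sub, mul_smul_comm, t1, t2, t3, hzz, smul_zero]
    abel
  · convert hq' using 1
    rw [pow_two, mul_assoc, e1]
    have t1 : c * g * (c * y * g) = c ^ 2 * y * g := by
      rw [← hgf.eq, mul_assoc, ← mul_assoc g g, hg, hgf.eq, pow_two]; simp only [mul_assoc]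
    have t2 : c * g * k = 0 := by rw [mul_assoc, hgz, mul_zero]
    have t3 : k * (c * y * g) = 0 := by rw [← hgf.eq, ← mul_assoc, hzg, zero_mul]
    simp only [sub_mul, mul_add, smul_mul_assoc, t1, t2, t3, hzz, smul_zero]
    abel

/-- punctured invertibility -/
lemma gd_isolated [CompleteSpace A] {w : A} {l : ℂ} (h : IsGDrazinInv (w - l • (1 : A))) :
    ∀ᶠ m in 𝓝[≠] l, m ∉ spectrum ℂ w := by
  obtain ⟨y, h1, h2, hq⟩ := h
  set c := w - l • (1 : A) with hc
  obtain ⟨a1, a2, a3, a4, a5, a6, a7, a8, a9⟩ := gi_facts h1 h2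
  have hnhds : ∀ᶠ m in 𝓝 l, IsUnit (1 + (l - m) • y) := by
    have hcont : Continuous fun m : ℂ => 1 + (l - m) • y := by fun_prop
    have hmem : {s : A | IsUnit s} ∈ 𝓝 (1 + (l - l) • y) :=
      (Units.isOpen (R := A)).mem_nhds (by simp)
    exact hcont.continuousAt.eventually_mem hmem
  filter_upwards [nhdsWithin_le_nhds hnhds, self_mem_nhdsWithin] with m hm hne
  have hne' : l - m ≠ 0 := sub_ne_zero.2 (Ne.symm hne)
  rw [spectrum.notMem_iff, Algebra.algebraMap_eq_smul_one, ← IsUnit.neg_iff, neg_sub]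
  have hwm : w - m • (1 : A) = c + (l - m) • 1 := by rw [hc, sub_smul]; abel
  rw [hwm]
  have hu1 : IsUnit ((l - m) • (1 : A) + (c - c ^ 2 * y)) :=
    isUnit_add_qn (isUnit_smul_one hne') hq ((Commute.one_right _).smul_right _)
  rw [a6] at hu1
  obtain ⟨p, p1, p2, p3⟩ := isUnit_inv hu1
  obtain ⟨q, q1, q2, q3⟩ := isUnit_inv hm
  have cce : Commute c (1 - c * y) := a5
  have hcp : Commute c p := p3 c (((Commute.one_right _).smul_right _).add_right
    ((Commute.refl c).mul_right cce))
  have hcq : Commute c q := q3 c ((Commute.one_right _).add_right (Commute.smul_right h1 _))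
  set e := 1 - c * y with he
  set n := l - m
  have hce' : Commute e p := p3 e (((Commute.one_right _).smul_right _).add_right
    (cce.symm.mul_right (Commute.refl e)))
  set u := e * p + y * q with hu
  have k1 : (c + n • 1) * (e * p) = e := by
    have : (c + n • 1) * e = e * (n • 1 + c * e) := by
      rw [add_mul, mul_add, ← mul_assoc e c, ← a5, mul_assoc c, a7, mul_smul_comm, smul_mul_assoc, mul_one, one_mul,
        add_comm]
    rw [← mul_assoc, this, mul_assoc, p1, mul_one]
  have k2 : (c + n • 1) * (y * q) = c * y := by
    have : (c + n • 1) * y = c * y * (1 + n • y) := by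
      rw [add_mul, mul_add, mul_smul_comm, a3, smul_mul_assoc, mul_one, one_mul]
    rw [← mul_assoc, this, mul_assoc, q1, mul_one]
  have k3 : (c + n • 1) * u = 1 := by
    rw [hu, mul_add, k1, k2, he]; abel
  have hcu : Commute (c + n • 1) u := by
    apply Commute.add_left
    · exact (cce.mul_right hcp).add_right (Commute.mul_right h1 hcq)
    · exact (Commute.one_left u).smul_left n
  exact ⟨⟨c + n • 1, u, k3, hcu.eq ▸ k3⟩, rfl⟩

lemma acc_finite [CompleteSpace A] {w : A} (hw : MemAcc w) {d : ℝ} (hd : 0 < d) :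
    {z | z ∈ spectrum ℂ w ∧ d ≤ ‖z‖}.Finite := by
  by_contra hinf
  have hK : IsCompact {z | z ∈ spectrum ℂ w ∧ d ≤ ‖z‖} :=
    (spectrum.isCompact w).inter_right (isClosed_le continuous_const continuous_norm)
  obtain ⟨l, hl, hacc⟩ := Set.Infinite.exists_accPt_of_subset_isCompact hinf hK subset_rfl
  have hl0 : l ≠ 0 := by
    rintro rfl
    have := hl.2
    simp at this; linarith
  rw [accPt_iff_frequently_nhdsNE] at hacc
  exact hacc ((gd_isolated (hw l hl0)).mono fun m hm h => hm h.1)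

lemma gprod [CompleteSpace A] {w : A} (Y : ℂ → A)
    (hY : ∀ l : ℂ, l ≠ 0 → (w - l • (1 : A)) * Y l = Y l * (w - l • (1 : A)) ∧
      Y l * (w - l • (1 : A)) * Y l = Y l ∧
      IsQuasinilpotent ((w - l • (1 : A)) - (w - l • (1 : A)) ^ 2 * Y l))
    (F : Finset ℂ) : (∀ l ∈ F, l ≠ 0) →
    ∃ g : A, g * g = g ∧ (∀ t, Commute t w → Commute t g) ∧
      (∀ l ∈ F, (1 - (w - l • (1 : A)) * Y l) * g = 0) ∧
      (∃ u, (∀ t, Commute t w → Commute t u) ∧ w * u = 1 - g) ∧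
      (∀ z, (∀ l ∈ F, z * (1 - (w - l • (1 : A)) * Y l) = 0) → z * g = z) ∧
      (∀ z, (∀ l ∈ F, (1 - (w - l • (1 : A)) * Y l) * z = 0) → g * z = z) := by
  classical
  induction F using Finset.induction_on with
  | empty =>
    intro _
    exact ⟨1, by simp, fun t _ => Commute.one_right t, by simp,
      ⟨0, fun t _ => Commute.zero_right t, by simp⟩, by simp, by simp⟩
  | insert l F hlF ih =>
    intro hF
    obtain ⟨g, g1, g2, g3, ⟨u, u1, u2⟩, g5, g6⟩ := ih fun m hm => hF m (Finset.mem_insert_of_mem hm)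
    have hl := hF l (Finset.mem_insert_self _ _)
    obtain ⟨h1, h2, hq⟩ := hY l hl
    obtain ⟨a1, a2, a3, a4, a5, a6, a7, a8, a9⟩ := gi_facts h1 h2
    have hEc : ∀ t, Commute t w → Commute t (1 - (w - l • (1 : A)) * Y l) := by
      intro t ht
      have htc : Commute t (w - l • (1 : A)) := ht.sub_right ((Commute.one_right t).smul_right l)
      exact (Commute.one_right t).sub_right (htc.mul_right (gd_bicomm h1 h2 hq htc))
    have hu1 : IsUnit (l • (1 : A) + ((w - l • (1 : A)) - (w - l • (1 : A)) ^ 2 * Y l)) :=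
      isUnit_add_qn (isUnit_smul_one hl) hq ((Commute.one_right _).smul_right _)
    rw [a6] at hu1
    obtain ⟨p, p1, p2, p3⟩ := isUnit_inv hu1
    have hww := hEc w (Commute.refl w)
    have hpc : ∀ t, Commute t w → Commute t p := by
      intro t ht
      have htc : Commute t (w - l • (1 : A)) := ht.sub_right ((Commute.one_right t).smul_right l)
      exact p3 t (((Commute.one_right t).smul_right l).add_right (htc.mul_right (hEc t ht)))
    set E := 1 - (w - l • (1 : A)) * Y l with hE
    clear_value E
    have hwE : w * (E * p) = E := by
      have : w * E = E * (l • (1 : A) + (w - l • (1 : A)) * E) := by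
        rw [mul_add, ← mul_assoc E, ← a5, mul_assoc _ E E, a7, sub_mul]; simp
      rw [← mul_assoc, this, mul_assoc, p1, mul_one]
    have hgw : Commute w g := g2 w (Commute.refl w)
    have hEg : Commute E g := g2 E hww.symm
    refine ⟨g * (1 - E), ?_, ?_, ?_, ⟨u + g * (E * p), ?_, ?_⟩, ?_, ?_⟩
    · have : Commute (1 - E) g := (Commute.one_left g).sub_left hEg
      have h4 : (1 - E) * (1 - E) = 1 - E := by
        rw [mul_sub, sub_mul _ _ E, a7]; simp
      rw [mul_assoc, ← mul_assoc (1 - E), this.eq, mul_assoc, h4, ← mul_assoc, g1]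
    · intro t ht
      exact (g2 t ht).mul_right ((Commute.one_right t).sub_right (hEc t ht))
    · intro m hm
      rcases Finset.mem_insert.1 hm with rfl | hm
      · rw [← hE, ← mul_assoc, hEg.eq, mul_assoc, mul_sub, a7]; simp
      · rw [← mul_assoc, g3 m hm, zero_mul]
    · intro t ht
      exact (u1 t ht).add_right ((g2 t ht).mul_right ((hEc t ht).mul_right (hpc t ht)))
    · rw [mul_add, u2, ← mul_assoc w g, hgw.eq, mul_assoc, hwE, mul_sub, mul_one]; abel
    · intro z hz
      rw [← mul_assoc, g5 z fun m hm => hz m (Finset.mem_insert_of_mem hm), mul_sub,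
        hE, hz l (Finset.mem_insert_self _ _)]; simp
    · intro z hz
      rw [mul_assoc, sub_mul, hE, hz l (Finset.mem_insert_self _ _), one_mul, sub_zero,
        g6 z fun m hm => hz m (Finset.mem_insert_of_mem hm)]

lemma radius_small [CompleteSpace A] [Nontrivial A] {w g : A} {d : ℝ≥0} (hd : 0 < d)
    (hg : g * g = g) (hgw : Commute w g)
    (H : ∀ m : ℂ, d ≤ ‖m‖₊ → ∃ y, Commute (w - m • 1) y ∧ Commute y g ∧
      (w - m • (1 : A)) * y * g = g) :
    spectralRadius ℂ (w * g) < d := by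
  apply spectrum.spectralRadius_lt_of_forall_lt
  intro m hm
  by_contra hlt
  rw [not_lt] at hlt
  have hm0 : m ≠ 0 := by
    rintro rfl
    simp at hlt
    exact hd.ne' hlt
  obtain ⟨y, y1, y2, y3⟩ := H m hlt
  apply hm
  rw [spectrum.mem_resolventSet_iff, Algebra.algebraMap_eq_smul_one, ← IsUnit.neg_iff, neg_sub]
  have hw' : w * g - m • 1 = (w - m • 1) * g - m • (1 - g) := by
    rw [sub_mul, smul_sub, smul_mul_assoc, one_mul]; abel
  have hgc : Commute (w - m • 1) g := hgw.sub_left ((Commute.one_left g).smul_left m)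
  have hgz : g * (1 - g) = 0 := by rw [mul_sub, hg]; simp
  have hzg : (1 - g) * g = 0 := by rw [sub_mul, hg]; simp
  have hzz : (1 - g) * (1 - g) = 1 - g := by rw [mul_sub, hzg]; simp
  have hsum : g + (1 - g) = 1 := by abel
  rw [hw']
  generalize w - m • 1 = c at *
  generalize 1 - g = k at *
  have t1 : c * g * (y * g) = g := by
    rw [mul_assoc, ← mul_assoc g, ← y2.eq, mul_assoc y, hg, ← mul_assoc, y3]
  have t1' : y * g * (c * g) = g := by
    rw [mul_assoc, ← mul_assoc g, ← hgc.eq, mul_assoc c, hg, ← mul_assoc, ← y1.eq, y3]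
  have t2 : c * g * k = 0 := by rw [mul_assoc, hgz, mul_zero]
  have t2' : y * g * k = 0 := by rw [mul_assoc, hgz, mul_zero]
  have t3 : k * (y * g) = 0 := by rw [y2.eq, ← mul_assoc, hzg, zero_mul]
  have t3' : k * (c * g) = 0 := by rw [hgc.eq, ← mul_assoc, hzg, zero_mul]
  refine ⟨⟨c * g - m • k, y * g - m⁻¹ • k, ?_, ?_⟩, rfl⟩
  · simp only [sub_mul, mul_sub, mul_smul_comm, smul_mul_assoc, t1, t2, t3, hzz, smul_zero, smul_smul]
    simp [hm0, hsum]
  · simp only [sub_mul, mul_sub, mul_smul_comm, smul_mul_assoc, t1', t2', t3', hzz, smul_zero, smul_smul]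
    simp [hm0, hsum]

end helpers

theorem agDrazin_add_quasinilpotent {A : Type*} [NormedRing A] [NormedAlgebra ℂ A]
    [CompleteSpace A] (a b : A) (ha : IsAgDrazinInv a) (hb : IsQuasinilpotent b)
    (hcomm : a * b = b * a) :
    IsAgDrazinInv (a + b) := by
  have hnt : Nontrivial A := by
    by_contra hn
    rw [not_nontrivial_iff_subsingleton] at hn
    have : spectrum ℂ b = ∅ := spectrum.of_subsingleton b
    unfold IsQuasinilpotent at hb
    rw [this] at hb
    exact Set.singleton_ne_empty _ hb.symm
  obtain ⟨x, h1, h2, hacc⟩ := ha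
  obtain ⟨a1, a2, a3, a4, a5, a6, a7, a8, a9⟩ := gi_facts h1 h2
  rw [a6] at hacc
  have hpq : a * x + (1 - a * x) = 1 := by abel
  have hqp0 : (a * x) * (1 - a * x) = 0 := by rw [mul_sub, a2]; simp
  have hq : a * x = 1 - (1 - a * x) := by abel
  obtain ⟨p, hp⟩ : ∃ p, p = 1 - a * x := ⟨_, rfl⟩
  rw [← hp] at a5 a6 a7 a8 a9 hacc hpq hqp0 hq
  have hap : Commute a p := a5
  obtain ⟨w, hw⟩ : ∃ w, w = a * p := ⟨_, rfl⟩
  rw [← hw] at hacc a6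
  have hwp : w * p = w := by rw [hw, mul_assoc, a7]
  have hpw : p * w = w := by rw [hw, a5, ← mul_assoc, a7]
  have hpwc : Commute p w := hpw.trans hwp.symm
  have haw : Commute a w := by rw [hw]; exact (Commute.refl a).mul_right hap
  obtain ⟨d, hd, hd1⟩ := exists_r x
  have hfin := acc_finite hacc (d := d) (by exact_mod_cast hd)
  choose! Y hY using hacc
  have hF0 : ∀ l ∈ hfin.toFinset, l ≠ 0 := by
    intro l hl
    rw [Set.Finite.mem_toFinset] at hl
    rintro rfl
    have := hl.2
    simp only [norm_zero] at this
    exact absurd hd (not_lt.2 (by exact_mod_cast this))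
  obtain ⟨g, g1, g2, g3, ⟨u, u1, u2⟩, g5, g6⟩ := gprod Y hY hfin.toFinset hF0
  have hgw : Commute w g := g2 w (Commute.refl w)
  have hga : Commute a g := g2 a haw
  have hgp : Commute p g := g2 p hpwc
  have hrad : spectralRadius ℂ (w * g) < d := by
    apply radius_small hd g1 hgw
    intro m hm
    have hmd : (d : ℝ) ≤ ‖m‖ := by exact_mod_cast hm
    have hgm : Commute g (w - m • (1 : A)) := hgw.symm.sub_right ((Commute.one_right g).smul_right m)
    by_cases hmF : m ∈ hfin.toFinset
    · obtain ⟨k1, k2, k3⟩ := hY m (hF0 m hmF)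
      refine ⟨Y m, k1, (gd_bicomm k1 k2 k3 hgm).symm, ?_⟩
      have := g3 m hmF
      rw [sub_mul, one_mul, sub_eq_zero] at this
      exact this.symm
    · have hms : m ∉ spectrum ℂ w := fun h => hmF (by
        rw [Set.Finite.mem_toFinset]; exact ⟨h, hmd⟩)
      rw [spectrum.notMem_iff, Algebra.algebraMap_eq_smul_one, ← IsUnit.neg_iff, neg_sub] at hms
      obtain ⟨z, z1, z2, z3⟩ := isUnit_inv hms
      exact ⟨z, z1.trans z2.symm, (z3 g hgm).symm, by rw [z1, one_mul]⟩
  -- the idempotent e = p * g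
  have hwg : a * (p * g) = w * g := by rw [hw, mul_assoc]
  have hee : (p * g) * (p * g) = p * g := by
    rw [mul_assoc, ← mul_assoc g, ← hgp.eq, mul_assoc p, g1, ← mul_assoc, a7]
  have hae : Commute a (p * g) := hap.mul_right hga
  have hbq1 : (p * g) * b * (a * x) = 0 := by
    apply zero_of_left (T := x) d hrad hd1
    calc w * g * (p * g * b * (a * x)) * x
        = a * ((p * g) * (p * g)) * b * ((a * x) * x) := by rw [← hwg]; simp only [mul_assoc]
      _ = (p * g) * (a * b) * x := by rw [hee, a3, hae.eq]; simp only [mul_assoc]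
      _ = (p * g) * b * (a * x) := by rw [hcomm]; simp only [mul_assoc]
  have hbq2 : (a * x) * b * (p * g) = 0 := by
    apply zero_of_right (T := x) d hrad hd1
    calc x * (a * x * b * (p * g)) * (w * g)
        = (x * (a * x)) * b * ((p * g) * a) * (p * g) := by rw [← hwg]; simp only [mul_assoc]
      _ = x * (b * a) * ((p * g) * (p * g)) := by rw [a4, ← hae.eq]; simp only [mul_assoc]
      _ = (x * a) * b * (p * g) := by rw [hee, ← hcomm]; simp only [mul_assoc]
      _ = (a * x) * b * (p * g) := by rw [a1]
  have hE : ∀ l ∈ hfin.toFinset, (p * g) * b * p * (1 - (w - l • (1 : A)) * Y l) = 0 ∧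
      (1 - (w - l • (1 : A)) * Y l) * (p * b * (p * g)) = 0 := by
    intro l hl
    obtain ⟨k1, k2, k3⟩ := hY l (hF0 l hl)
    have hg3 := g3 l hl
    obtain ⟨c1, c2, c3, c4, c5, c6, c7, c8, c9⟩ := gi_facts k1 k2
    have hpc : Commute p (w - l • (1 : A)) := hpwc.sub_right ((Commute.one_right p).smul_right l)
    have hgc : Commute g (w - l • (1 : A)) := hgw.symm.sub_right ((Commute.one_right g).smul_right l)
    have hpY := gd_bicomm k1 k2 k3 hpc
    have hgY := gd_bicomm k1 k2 k3 hgc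
    have hpa : p * (w - l • (1 : A)) = p * (a - l • 1) := by
      rw [mul_sub, mul_sub, hpw, hw, a5]
    have hba : Commute b (a - l • (1 : A)) :=
      Commute.sub_right (Eq.symm hcomm) ((Commute.one_right b).smul_right l)
    have hpa' : Commute p (a - l • (1 : A)) := hap.symm.sub_right ((Commute.one_right p).smul_right l)
    rw [sub_mul, one_mul, sub_eq_zero] at hg3
    have hgE : Commute g (1 - (w - l • (1 : A)) * Y l) :=
      (Commute.one_right g).sub_right (hgc.mul_right hgY)
    have hpE : Commute p (1 - (w - l • (1 : A)) * Y l) :=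
      (Commute.one_right p).sub_right (hpc.mul_right hpY)
    rw [c6] at k3
    generalize 1 - (w - l • (1 : A)) * Y l = E at *
    generalize w - l • (1 : A) = c at *
    generalize a - l • (1 : A) = a' at *
    generalize Y l = y at *
    constructor
    · apply qzero_right (T := y) k3
      calc y * (p * g * b * p * E) * (c * E)
          = y * (p * g) * b * p * (E * c) * E := by simp only [mul_assoc]
        _ = y * (p * g) * b * (p * c) * (E * E) := by rw [← c5]; simp only [mul_assoc]
        _ = y * (p * g) * b * (a' * p) * E := by rw [hpa, c7, hpa'.eq]
        _ = y * (p * g) * (b * a') * p * E := by simp only [mul_assoc]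
        _ = y * (p * g) * (a' * b) * p * E := by rw [hba.eq]
        _ = y * (g * p) * (a' * b) * p * E := by rw [hgp.eq]
        _ = y * g * (p * a') * b * p * E := by simp only [mul_assoc]
        _ = y * g * (c * p) * b * p * E := by rw [← hpa, hpc.eq]
        _ = y * (g * c) * p * b * p * E := by simp only [mul_assoc]
        _ = (y * c) * g * p * b * p * E := by rw [hgc.eq]; simp only [mul_assoc]
        _ = (g * p) * b * p * E := by rw [c1, ← hg3]
        _ = p * g * b * p * E := by rw [hgp.eq]
    · apply qzero_left (T := y) k3
      calc c * E * (E * (p * b * (p * g))) * y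
          = c * (E * E) * p * b * (p * (g * y)) := by simp only [mul_assoc]
        _ = E * (c * p) * b * (p * (y * g)) := by rw [c7, hgY.eq, c5]; simp only [mul_assoc]
        _ = E * p * (a' * b) * (p * (y * g)) := by rw [← hpc.eq, hpa]; simp only [mul_assoc]
        _ = E * p * (b * a') * (p * (y * g)) := by rw [hba.eq]
        _ = E * p * b * (a' * p) * (y * g) := by simp only [mul_assoc]
        _ = E * p * b * p * (c * y * g) := by rw [← hpa'.eq, ← hpa]; simp only [mul_assoc]
        _ = E * (p * b * (p * g)) := by rw [← hg3]; simp only [mul_assoc]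
  have r1 : (p * g) * b * p * g = (p * g) * b * p := g5 _ fun l hl => (hE l hl).1
  have r2 : g * (p * b * (p * g)) = p * b * (p * g) := g6 _ fun l hl => (hE l hl).2
  have hbe : Commute b (p * g) := by
    have s1 : (p * g) * b = (p * g) * b * (p * g) := by
      calc (p * g) * b = (p * g) * b * (a * x + p) := by rw [hpq, mul_one]
        _ = (p * g) * b * p := by rw [mul_add, hbq1, zero_add]
        _ = (p * g) * b * (p * g) := by rw [← r1]; simp only [mul_assoc]
    have s2 : b * (p * g) = (p * g) * b * (p * g) := by
      calc b * (p * g) = (a * x + p) * (b * (p * g)) := by rw [hpq, one_mul]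
        _ = p * b * (p * g) := by
            rw [add_mul, ← mul_assoc (a * x), hbq2, zero_add, mul_assoc]
        _ = (g * p) * b * (p * g) := by rw [← r2]; simp only [mul_assoc]
        _ = _ := by rw [hgp.eq]
    exact s2.trans s1.symm
  -- the inverse on the complement
  have hgz : (1 - g) * g = 0 := by rw [sub_mul, g1]; simp
  have hzz : (1 - g) * (1 - g) = 1 - g := by rw [mul_sub, hgz]; simp
  have hpz : p * (1 - g) = 1 - g := by rw [← u2, ← mul_assoc, hpw]
  have hau : Commute a u := u1 a haw
  have haz : Commute a (1 - g) := (Commute.one_right a).sub_right hga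
  obtain ⟨v, hv⟩ : ∃ v, v = x + p * u * (1 - g) := ⟨_, rfl⟩
  have hav : Commute a v := by
    rw [hv]
    exact Commute.add_right h1 ((hap.mul_right hau).mul_right haz)
  have hf : a * v = 1 - p * g := by
    calc a * v = a * x + (a * p) * u * (1 - g) := by rw [hv, mul_add]; simp only [mul_assoc]
      _ = a * x + (1 - g) := by rw [← hw, u2, hzz]
      _ = a * x + p * (1 - g) := by rw [hpz]
      _ = 1 - p * g := by rw [mul_sub, mul_one, ← hpq]; abel
  have hvv : v * a * v = v := by
    rw [mul_assoc, hf, mul_sub, mul_one]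
    have : v * (p * g) = 0 := by
      rw [hv, add_mul, ← mul_assoc x, a9, hgp.eq, mul_assoc (p * u), ← mul_assoc (1 - g), hgz]
      simp
    rw [this, sub_zero]
  have hbv : Commute b v := by
    apply comm_of_comm_idem hav hvv (Eq.symm hcomm)
    rw [hf]
    exact (Commute.one_right b).sub_right hbe
  obtain ⟨x', x1, x2, x3⟩ := perturb hav hvv hb (Eq.symm hcomm) hbv
  refine ⟨x', x1, x2, ?_⟩
  rw [x3]
  have q1 : a - a ^ 2 * v = w * g := by
    rw [pow_two, mul_assoc, hf, mul_sub, mul_one, hwg]; abel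
  have q2 : 1 - a * v = p * g := by rw [hf]; abel
  rw [q1, q2]
  have hb1 : Commute b (w * g) := by
    rw [← hwg]; exact Commute.mul_right (Eq.symm hcomm) hbe
  have hb2 : Commute (p * g) (w * g) := by
    rw [← hwg]; exact Commute.mul_right hae.symm (Commute.refl _)
  exact acc_add (acc_mul (fun l hl => ⟨Y l, hY l hl⟩) g1 hgw.symm) (qn_mul hb hbe)
    (hb1.mul_left hb2)
end
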